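/- arXiv:1009.1647 — 2 statements merged into one kernel-verified Lean document; each statement's English description precedes it below -/
import Mathlib

section
/- Let G be a group with a convergence group action on a compact metrizable space M with at least three points, let H be a dynamically quasiconvex subgroup of G, let J ≤ G be an infinite subgroup, and let z ∈ Λ(H) ∩ Λ(J) be a conical limit point of J. Then H ∩ J is infinite and z is a conical limit point of H ∩ J; in particular z ∈ Λ(H ∩ J). -/
open Pointwise Filter Topology Set

section ConvergenceGroups

variable (G M : Type*) [Group G] [TopologicalSpace M] [MulAction G M]

/-- A convergence group action: the action is by homeomorphisms (each element acts
continuously, hence as a homeomorphism since the action is by a group), and the induced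
diagonal action on the space of distinct triples of points of `M` is properly
discontinuous. -/
def IsConvergenceAction : Prop :=
  (∀ g : G, Continuous fun x : M => g • x) ∧
    ∀ K L : Set (M × M × M), IsCompact K → IsCompact L →
      (∀ t ∈ K ∪ L, t.1 ≠ t.2.1 ∧ t.1 ≠ t.2.2 ∧ t.2.1 ≠ t.2.2) →
      {g : G | ((g • K) ∩ L).Nonempty}.Finite

/-- The limit set of a subgroup `H ≤ G`: the set of accumulation points in `M` of
the `H`-orbits of points of `M`. -/
def limitSet (H : Subgroup G) : Set M :=
  {x : M | ∃ m : M, x ∈ closure (((fun h : G => h • m) '' (H : Set G)) \ {x})}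

/-- `z` is a conical limit point of the subgroup `H`. -/
def IsConicalLimitPoint (H : Subgroup G) (z : M) : Prop :=
  ∃ (h : ℕ → G) (a b : M), (∀ n, h n ∈ H) ∧ a ≠ b ∧
    Tendsto (fun n => h n • z) atTop (nhds a) ∧
    ∀ q : M, q ≠ z → Tendsto (fun n => h n • q) atTop (nhds b)

/-- `g` is loxodromic: it has infinite order and fixes exactly two points of `M`. -/
def IsLoxodromic (g : G) : Prop :=
  ¬ IsOfFinOrder g ∧ {x : M | g • x = x}.encard = 2

/-- `p` is a bounded parabolic point of the subgroup `H`: its stabilizer in `H` is an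
infinite subgroup containing no loxodromic element, which acts cocompactly on
`Λ(H) \ {p}`. -/
def IsBoundedParabolicPoint (H : Subgroup G) (p : M) : Prop :=
  ((H ⊓ MulAction.stabilizer G p : Subgroup G) : Set G).Infinite ∧
  (∀ g ∈ H ⊓ MulAction.stabilizer G p, ¬ IsLoxodromic G M g) ∧
  ∃ C : Set M, IsCompact C ∧ C ⊆ limitSet G M H \ {p} ∧
    limitSet G M H \ {p} ⊆ ⋃ g ∈ (H ⊓ MulAction.stabilizer G p : Subgroup G), g • C

/-- `H` is dynamically quasiconvex: for every pair of disjoint closed subsets `K, L` of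
`M`, the set of cosets `gH` with `gΛ(H)` meeting both `K` and `L` is finite. -/
def DynamicallyQuasiconvex (H : Subgroup G) : Prop :=
  ∀ K L : Set M, IsClosed K → IsClosed L → Disjoint K L →
    ((fun g : G => (g : G ⧸ H)) ''
      {g : G | ((g • limitSet G M H) ∩ K).Nonempty ∧
               ((g • limitSet G M H) ∩ L).Nonempty}).Finite

end ConvergenceGroups

/-!
Let `g i` be elements of `G` leaving every finite set along an ultrafilter. Relate `x` to `y` in `M`
if `g i • u i → y` for some `u i → x`. No three edges of this relation have pairwise distinct
sources and pairwise distinct targets, by proper discontinuity on triples, and by compactness every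
point is a source and a target. Hence it is covered by one source `r` and one target `a`, which says
that `g i` sends the complement of any neighbourhood of `r` into any neighbourhood of `a`.

If `j n • z → a` and `j n • q → b ≠ a` for `q ≠ z`, then `Λ(H)` cannot be `{z}`: otherwise the
conjugates `j n * h * (j n)⁻¹` fix `j n • z`, which is near `a`, and almost fix `j n • q`, which is
near `b`. So some of them act with north-south dynamics between `a` and `b`, and this
produces a point of `Λ(H)` outside a neighbourhood of `z`. Given `w ∈ Λ(H)` with `w ≠ z`, the
translates `j n • Λ(H)` meet neighbourhoods of both `a` and `b`. By quasiconvexity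
infinitely many `j n` lie in one coset of `H`, and their quotients `(j n₀)⁻¹ * j n ∈ H ⊓ J` exhibit
`z` as a conical limit point of `H ⊓ J`.
-/

section Matching

variable {α β : Type*} {R : α → β → Prop}

/-- The space of distinct triples of points of `α`, on which a convergence group acts properly
discontinuously when `α = M`. -/
def distinctTriples (α : Type*) : Set (α × α × α) :=
  {t | t.1 ≠ t.2.1 ∧ t.1 ≠ t.2.2 ∧ t.2.1 ≠ t.2.2}

/-- A matching of size three in the bipartite graph of the relation `R`: three edges with pairwise
distinct sources and pairwise distinct targets. -/
def HasTripleMatching (R : α → β → Prop) : Prop :=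
  ∃ s ∈ distinctTriples α, ∃ t ∈ distinctTriples β, R s.1 t.1 ∧ R s.2.1 t.2.1 ∧ R s.2.2 t.2.2

theorem HasTripleMatching.of_flip : HasTripleMatching (flip R) → HasTripleMatching R :=
  fun ⟨t, ht, s, hs, hR⟩ => ⟨s, hs, t, ht, hR⟩

theorem exists_infinite_fiber_of_not_hasTripleMatching [Infinite α] (hR : ∀ x, ∃ y, R x y)
    (hmatch : ¬ HasTripleMatching R) : ∃ y, {x | R x y}.Infinite := by
  by_contra! hfin
  choose F hF using hR
  obtain ⟨x₁⟩ : Nonempty α := inferInstance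
  obtain ⟨x₂, hx₂⟩ := (hfin (F x₁)).exists_notMem
  obtain ⟨x₃, hx₃⟩ := ((hfin (F x₁)).union (hfin (F x₂))).exists_notMem
  have ne_of_notMem {x x' : α} (h : ¬ R x' (F x)) : x ≠ x' ∧ F x ≠ F x' :=
    ⟨fun e => h (e ▸ hF x), fun e => h (e ▸ hF x')⟩
  have h₁₂ := ne_of_notMem hx₂
  have h₁₃ := ne_of_notMem fun h => hx₃ (.inl h)
  have h₂₃ := ne_of_notMem fun h => hx₃ (.inr h)
  exact hmatch ⟨(x₁, x₂, x₃), ⟨h₁₂.1, h₁₃.1, h₂₃.1⟩, (F x₁, F x₂, F x₃),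
    ⟨h₁₂.2, h₁₃.2, h₂₃.2⟩, hF x₁, hF x₂, hF x₃⟩

-- A case of König's theorem: the other vertex covers of size two, by two sources or by two targets,
-- are excluded by totality.
theorem exists_forall_eq_or_eq_of_not_hasTripleMatching [Infinite α] [Infinite β]
    (hleft : ∀ x, ∃ y, R x y) (hright : ∀ y, ∃ x, R x y) (hmatch : ¬ HasTripleMatching R) :
    ∃ r a, ∀ x y, R x y → x = r ∨ y = a := by
  obtain ⟨a, ha⟩ := exists_infinite_fiber_of_not_hasTripleMatching hleft hmatch
  obtain ⟨r, hr⟩ := exists_infinite_fiber_of_not_hasTripleMatching (R := flip R) hright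
    fun h => hmatch h.of_flip
  refine ⟨r, a, fun x y hxy => ?_⟩
  by_contra! hne
  obtain ⟨x', hx'a, hx'⟩ := ha.exists_notMem_finite (toFinite {x, r})
  obtain ⟨y', hry', hy'⟩ := hr.exists_notMem_finite (toFinite {y, a})
  simp only [mem_insert_iff, mem_singleton_iff, not_or] at hx' hy'
  exact hmatch ⟨(x, r, x'), ⟨hne.1, Ne.symm hx'.1, Ne.symm hx'.2⟩, (y, y', a),
    ⟨Ne.symm hy'.1, hne.2, hy'.2⟩, hxy, hry', hx'a⟩

end Matching

section Collapsing

variable {G M ι : Type*} [Group G] [TopologicalSpace M] [MulAction G M]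
  {l : Filter ι} {f : ι → G} {r a x y : M}

/-- `y` is a limit along `l` of the images under `f i` of points converging to `x`. This closure of
the graphs of the maps `f i` records their dynamics; `l` is meant to be an ultrafilter. -/
def LimitRel (l : Filter ι) (f : ι → G) (x y : M) : Prop :=
  ∃ u : ι → M, Tendsto u l (𝓝 x) ∧ Tendsto (fun i => f i • u i) l (𝓝 y)

/-- The collapsing property of convergence groups: along `l`, the maps `f i` converge to the
constant `a` uniformly away from the repelling point `r`. In a compact Hausdorff space this is
locally uniform convergence on `M \ {r}`. -/
def IsCollapsing (l : Filter ι) (f : ι → G) (r a : M) : Prop :=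
  ∀ B ∈ 𝓝 r, ∀ A ∈ 𝓝 a, ∀ᶠ i in l, MapsTo (f i • ·) Bᶜ A

theorem IsCollapsing.inv (h : IsCollapsing l f r a) : IsCollapsing l f⁻¹ a r := by
  intro A hA B hB
  filter_upwards [h B hB A hA] with i hi p hpA
  by_contra hpB
  exact hpA (by simpa using hi hpB)

theorem IsCollapsing.tendsto [T2Space M] (h : IsCollapsing l f r a) {u : ι → M}
    (hu : Tendsto u l (𝓝 x)) (hx : x ≠ r) : Tendsto (fun i => f i • u i) l (𝓝 a) := by
  refine fun A hA => mem_map.2 ?_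
  obtain ⟨X, B, hX, hB, hXB⟩ := t2_separation_nhds hx
  filter_upwards [h _ hB A hA, hu.eventually_mem hX] with i hi hui
  exact hi (hXB.notMem_of_mem_left hui)

theorem IsCollapsing.eq_or_eq_of_limitRel [T2Space M] [l.NeBot] (h : IsCollapsing l f r a)
    (hxy : LimitRel l f x y) : x = r ∨ y = a := by
  obtain ⟨u, hu, hfu⟩ := hxy
  exact or_iff_not_imp_left.2 fun hx => tendsto_nhds_unique hfu (h.tendsto hu hx)

theorem exists_limitRel_right [CompactSpace M] (V : Ultrafilter ι) (f : ι → G) (x : M) :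
    ∃ y, LimitRel V f x y :=
  ⟨_, fun _ => x, tendsto_const_nhds, (V.map fun i => f i • x).le_nhds_lim⟩

theorem exists_limitRel_left [CompactSpace M] (V : Ultrafilter ι) (f : ι → G) (y : M) :
    ∃ x, LimitRel V f x y :=
  ⟨_, fun i => (f i)⁻¹ • y, (V.map fun i => (f i)⁻¹ • y).le_nhds_lim,
    by simpa using tendsto_const_nhds⟩

theorem LimitRel.mono {l' : Filter ι} (h : LimitRel l f x y) (hl : l' ≤ l) : LimitRel l' f x y :=
  let ⟨u, hu, hfu⟩ := h
  ⟨u, hu.mono_left hl, hfu.mono_left hl⟩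

theorem isCollapsing_of_forall_limitRel [CompactSpace M] {V : Ultrafilter ι}
    (h : ∀ x y, LimitRel V f x y → x = r ∨ y = a) : IsCollapsing V f r a := by
  intro B hB A hA
  by_contra hfail
  have hbad : ∀ᶠ i in V, ∃ p, p ∉ B ∧ f i • p ∉ A := by
    filter_upwards [Ultrafilter.eventually_not.2 hfail] with i hi
    simpa [MapsTo] using hi
  obtain ⟨u, hu⟩ := hbad.choice
  have hx := (V.map u).le_nhds_lim
  have hy := (V.map fun i => f i • u i).le_nhds_lim
  rcases h _ _ ⟨u, hx, hy⟩ with hr | ha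
  · obtain ⟨i, hi, hiB⟩ := (hu.and (hx (hr ▸ hB))).exists
    exact hi.1 hiB
  · obtain ⟨i, hi, hiA⟩ := (hu.and (hy (ha ▸ hA))).exists
    exact hi.2 hiA

theorem isOpen_distinctTriples [T2Space M] : IsOpen (distinctTriples M) :=
  (isOpen_ne_fun (by fun_prop) (by fun_prop)).inter <|
    (isOpen_ne_fun (by fun_prop) (by fun_prop)).inter <|
      isOpen_ne_fun (by fun_prop) (by fun_prop)

namespace IsConvergenceAction

theorem not_hasTripleMatching_limitRel [LocallyCompactSpace M] [T2Space M] [l.NeBot]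
    (hconv : IsConvergenceAction G M) (hf : Tendsto f l cofinite) :
    ¬ HasTripleMatching (LimitRel (M := M) l f) := by
  rintro ⟨s, hs, t, ht, ⟨u₁, hu₁, hfu₁⟩, ⟨u₂, hu₂, hfu₂⟩, ⟨u₃, hu₃, hfu₃⟩⟩
  obtain ⟨K, hKs, hKsub, hK⟩ := local_compact_nhds (isOpen_distinctTriples.mem_nhds hs)
  obtain ⟨L, hLt, hLsub, hL⟩ := local_compact_nhds (isOpen_distinctTriples.mem_nhds ht)
  have hfin := hconv.2 K L hK hL (union_subset hKsub hLsub)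
  obtain ⟨i, hiK, hiL, hi⟩ := ((hu₁.prodMk_nhds (hu₂.prodMk_nhds hu₃)).eventually hKs |>.and <|
    ((hfu₁.prodMk_nhds (hfu₂.prodMk_nhds hfu₃)).eventually hLt).and <|
      hf.eventually hfin.compl_mem_cofinite).exists
  exact hi ⟨_, ⟨_, hiK, rfl⟩, hiL⟩

theorem exists_isCollapsing [CompactSpace M] [T2Space M] [Infinite M]
    (hconv : IsConvergenceAction G M) {V : Ultrafilter ι} (hf : Tendsto f V cofinite) :
    ∃ r a : M, IsCollapsing V f r a := by
  obtain ⟨r, a, h⟩ := exists_forall_eq_or_eq_of_not_hasTripleMatching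
    (exists_limitRel_right V f) (exists_limitRel_left V f)
    (hconv.not_hasTripleMatching_limitRel hf)
  exact ⟨r, a, isCollapsing_of_forall_limitRel h⟩

theorem isCollapsing_or_isCollapsing_of_limitRel [CompactSpace M] [T2Space M] [Infinite M]
    (hconv : IsConvergenceAction G M) {V : Ultrafilter ι} (hf : Tendsto f V cofinite) {a b : M}
    (hab : a ≠ b) (ha : LimitRel V f a a) (hb : LimitRel V f b b) :
    IsCollapsing V f a b ∨ IsCollapsing V f b a := by
  obtain ⟨r, c, h⟩ := hconv.exists_isCollapsing hf
  rcases h.eq_or_eq_of_limitRel ha with rfl | rfl <;>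
    rcases h.eq_or_eq_of_limitRel hb with rfl | rfl
  exacts [absurd rfl hab, .inl h, .inr h, absurd rfl hab]

end IsConvergenceAction

end Collapsing

section LimitSet

variable {G M : Type*} [Group G] [TopologicalSpace M] [MulAction G M] {H : Subgroup G} {z : M}

theorem mem_limitSet_iff_accPt :
    z ∈ limitSet G M H ↔ ∃ m : M, AccPt z (𝓟 ((fun h : G => h • m) '' (H : Set G))) :=
  exists_congr fun _ => by rw [accPt_principal_iff_nhdsWithin, mem_closure_iff_nhdsWithin_neBot]

theorem exists_infinite_orbit_of_mem_limitSet [T1Space M] (hz : z ∈ limitSet G M H) :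
    ∃ m : M, ((fun h : G => h • m) '' (H : Set G)).Infinite := by
  obtain ⟨m, hm⟩ := hz
  refine ⟨m, fun hfin => ?_⟩
  rw [hfin.sdiff.isClosed.closure_eq] at hm
  exact hm.2 rfl

theorem infinite_of_mem_limitSet [T1Space M] (hz : z ∈ limitSet G M H) : (H : Set G).Infinite :=
  (exists_infinite_orbit_of_mem_limitSet hz).choose_spec.of_image

theorem infinite_space_of_mem_limitSet [T1Space M] (hz : z ∈ limitSet G M H) : Infinite M :=
  infinite_univ_iff.1 <|
    (exists_infinite_orbit_of_mem_limitSet hz).choose_spec.mono (subset_univ _)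

theorem smul_mem_limitSet {h : G} (hcont : Continuous fun x : M => h • x) (hh : h ∈ H)
    (hz : z ∈ limitSet G M H) : h • z ∈ limitSet G M H := by
  obtain ⟨m, hm⟩ := mem_limitSet_iff_accPt.1 hz
  refine mem_limitSet_iff_accPt.2
    ⟨m, (hm.map hcont.continuousAt (MulAction.injective h)).mono ?_⟩
  rw [map_principal, principal_mono]
  rintro _ ⟨_, ⟨g, hg, rfl⟩, rfl⟩
  exact ⟨h * g, H.mul_mem hh hg, mul_smul h g m⟩

theorem not_limitSet_subset_of_mapsTo_compl [CompactSpace M] {h : G} (hh : h ∈ H) {A B : Set M}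
    (hA : IsOpen A) (hAB : Disjoint A B) {c : M} (hcA : c ∉ A) (hcB : c ∉ B)
    (hmaps : MapsTo (h • ·) Aᶜ B) : ¬ limitSet G M H ⊆ A := by
  have hpow : ∀ n : ℕ, h ^ (n + 1) • c ∈ B := by
    intro n
    induction n with
    | zero => simpa using hmaps hcA
    | succ n ih =>
      rw [pow_succ', mul_smul]
      exact hmaps (hAB.notMem_of_mem_right ih)
  have hinj : Function.Injective fun n : ℕ => h ^ (n + 1) • c := by
    refine .of_lt_imp_ne fun m n hmn heq => hcB ?_
    obtain ⟨k, rfl⟩ := Nat.exists_eq_add_of_lt hmn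
    have hfix : h ^ (k + 1) • c = c := by
      apply MulAction.injective (h ^ (m + 1))
      simpa only [smul_smul, ← pow_add, add_right_comm, add_assoc] using heq.symm
    exact hfix ▸ hpow k
  obtain ⟨y, hy⟩ := (infinite_range_of_injective hinj).exists_accPt_principal
  have hyA : y ∈ Aᶜ := hA.isClosed_compl.closure_subset_iff.2
    (range_subset_iff.2 fun n => hAB.notMem_of_mem_right (hpow n)) hy.clusterPt.mem_closure
  have hyH : y ∈ limitSet G M H := mem_limitSet_iff_accPt.2 ⟨c, hy.mono <| principal_mono.2 <|
    range_subset_iff.2 fun n => ⟨_, H.pow_mem hh (n + 1), rfl⟩⟩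
  exact fun hsub => hyA (hsub hyH)

end LimitSet

section Conical

variable {G M ι : Type*} [Group G] [TopologicalSpace M] [MulAction G M] {H J : Subgroup G}
  {z a b : M}

theorem tendsto_cofinite_of_tendsto_smul [T1Space M] {l : Filter ι} {g : ι → G} {p q : M}
    (hpq : p ≠ q) (hp : Tendsto (fun i => g i • p) l (𝓝 b))
    (hq : Tendsto (fun i => g i • q) l (𝓝 b)) : Tendsto g l cofinite := by
  refine le_cofinite_iff_eventually_ne.2 fun γ => ?_
  obtain ⟨x, hx, hγx⟩ : ∃ x, Tendsto (fun i => g i • x) l (𝓝 b) ∧ b ≠ γ • x := by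
    by_cases hγp : b = γ • p
    · exact ⟨q, hq, fun hγq => hpq (MulAction.injective γ (hγp.symm.trans hγq))⟩
    · exact ⟨p, hp, hγp⟩
  exact (hx.eventually_ne hγx).mono fun i hi hgi => hi (congrArg (· • x) hgi)

theorem IsConvergenceAction.isCollapsing_of_conical [CompactSpace M] [T2Space M] [Infinite M]
    (hconv : IsConvergenceAction G M) {V : Ultrafilter ι} {g : ι → G} (hab : a ≠ b)
    (hz : Tendsto (fun i => g i • z) V (𝓝 a))
    (hne : ∀ q : M, q ≠ z → Tendsto (fun i => g i • q) V (𝓝 b)) : IsCollapsing V g z b := by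
  obtain ⟨p, hp⟩ := (toFinite {z}).exists_notMem
  obtain ⟨q, hq⟩ := (toFinite {z, p}).exists_notMem
  simp only [mem_insert_iff, mem_singleton_iff, not_or] at hp hq
  obtain ⟨r, c, h⟩ := hconv.exists_isCollapsing
    (tendsto_cofinite_of_tendsto_smul hq.2 (hne q hq.1) (hne p hp))
  have h_const {x y : M} (hxy : Tendsto (fun i => g i • x) V (𝓝 y)) : x = r ∨ y = c :=
    h.eq_or_eq_of_limitRel ⟨fun _ => x, tendsto_const_nhds, hxy⟩
  obtain rfl : b = c := (h_const (hne p hp)).elim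
    (fun hpr => (h_const (hne q hq.1)).resolve_left fun hqr => hq.2 (hqr.trans hpr.symm)) id
  obtain rfl : z = r := (h_const hz).resolve_right hab
  exact h

theorem IsConicalLimitPoint.mem_limitSet [CompactSpace M] [T2Space M] [Infinite M]
    (hconv : IsConvergenceAction G M) (hcon : IsConicalLimitPoint G M J z) :
    z ∈ limitSet G M J := by
  obtain ⟨j, a, b, hj, hab, hz, hne⟩ := hcon
  obtain ⟨c, hc⟩ := (toFinite {a, b}).exists_notMem
  simp only [mem_insert_iff, mem_singleton_iff, not_or] at hc
  have hz' := hz.mono_left Nat.hyperfilter_le_atTop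
  have hcollapse : IsCollapsing (hyperfilter ℕ : Filter ℕ) j z b :=
    hconv.isCollapsing_of_conical hab hz' fun q hq =>
      (hne q hq).mono_left Nat.hyperfilter_le_atTop
  refine ⟨c, mem_closure_of_tendsto
    (hcollapse.inv.tendsto (tendsto_const_nhds (x := c)) hc.2) ?_⟩
  filter_upwards [hz'.eventually_ne (Ne.symm hc.1)] with n hn
  exact ⟨⟨(j n)⁻¹, J.inv_mem (hj n), rfl⟩, fun h => hn (inv_smul_eq_iff.1 h).symm⟩

-- For fixed `i` the conjugates of distinct elements are distinct, so at most one `h : G` has its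
-- conjugates equal to a given element for `U`-almost all `i`.
theorem tendsto_conj_curry_cofinite {l : Filter G} (hl : l ≤ cofinite) (U : Ultrafilter ι)
    (j : ι → G) :
    Tendsto (fun p : G × ι => j p.2 * p.1 * (j p.2)⁻¹) (l.curry U) cofinite := by
  refine le_cofinite_iff_eventually_ne.2 fun γ => eventually_map.2 <| eventually_curry_iff.2 ?_
  refine hl <| Set.Subsingleton.finite fun h₁ hh₁ h₂ hh₂ => ?_
  obtain ⟨i, hi₁, hi₂⟩ :=
    ((Ultrafilter.eventually_not.2 hh₁).and (Ultrafilter.eventually_not.2 hh₂)).exists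
  simpa using (not_not.1 hi₁).trans (not_not.1 hi₂).symm

theorem limitRel_conj_curry {l : Filter G} {m : Filter ι} {j : ι → G} {x y : M}
    (hx : Tendsto (fun i => j i • x) m (𝓝 y))
    (hlx : ∀ᶠ h in l, Tendsto (fun i => j i • h • x) m (𝓝 y)) :
    LimitRel (l.curry m) (fun p : G × ι => j p.2 * p.1 * (j p.2)⁻¹) y y :=
  ⟨fun p => j p.2 • x, Tendsto.curry (.of_forall fun _ => hx),
    by simpa [mul_smul] using! Tendsto.curry hlx⟩

theorem IsConvergenceAction.exists_mapsTo_conj [CompactSpace M] [T2Space M] [Infinite M]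
    (hconv : IsConvergenceAction G M) (hH : (H : Set G).Infinite) {U : Ultrafilter ι}
    {j : ι → G} {q : M} (hab : a ≠ b) (hz : ∀ h ∈ H, Tendsto (fun i => j i • h • z) U (𝓝 a))
    (hq : ∀ h ∈ H, Tendsto (fun i => j i • h • q) U (𝓝 b)) {A B : Set M} (hA : A ∈ 𝓝 a)
    (hB : B ∈ 𝓝 b) :
    ∃ i, ∃ h ∈ H, j i • z ∈ A ∧ MapsTo ((j i * h * (j i)⁻¹) • ·) Aᶜ B := by
  let l : Filter G := cofinite ⊓ 𝓟 (H : Set G)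
  have hl : l.NeBot := hH.cofinite_inf_principal_neBot
  have hlH : ∀ᶠ h in l, h ∈ H := mem_inf_of_right (mem_principal_self _)
  have : (l.curry (U : Filter ι)).NeBot :=
    (frequently_true_iff_neBot _).1 ((frequently_curry_iff _).2 (by simp [hl]))
  let V : Ultrafilter (G × ι) := .of (l.curry U)
  have hV : (V : Filter (G × ι)) ≤ l.curry U := Ultrafilter.of_le _
  have hz₁ : Tendsto (fun i => j i • z) U (𝓝 a) := by simpa using hz 1 H.one_mem
  have hq₁ : Tendsto (fun i => j i • q) U (𝓝 b) := by simpa using hq 1 H.one_mem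
  have hmem : ∀ᶠ p in (V : Filter (G × ι)), p.1 ∈ H ∧ j p.2 • z ∈ A :=
    hV (hlH.mono fun h hh => (hz₁.eventually hA).mono fun i hi => ⟨hh, hi⟩)
  rcases hconv.isCollapsing_or_isCollapsing_of_limitRel
    ((tendsto_conj_curry_cofinite inf_le_left U j).mono_left hV) hab
    ((limitRel_conj_curry hz₁ (hlH.mono hz)).mono hV)
    ((limitRel_conj_curry hq₁ (hlH.mono hq)).mono hV) with h | h
  · obtain ⟨⟨g, i⟩, hmaps, hg, hi⟩ := ((h A hA B hB).and hmem).exists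
    exact ⟨i, g, hg, hi, hmaps⟩
  · obtain ⟨⟨g, i⟩, hmaps, hg, hi⟩ := ((h.inv A hA B hB).and hmem).exists
    exact ⟨i, g⁻¹, H.inv_mem hg, hi, by simpa [mul_assoc] using hmaps⟩

-- This contains the fact that parabolic points are not conical: the limit set of the stabiliser of
-- a parabolic point is a singleton.
theorem IsConicalLimitPoint.exists_mem_limitSet_ne [CompactSpace M] [T2Space M]
    (hconv : IsConvergenceAction G M) (hcon : IsConicalLimitPoint G M J z)
    (hzH : z ∈ limitSet G M H) : ∃ w ∈ limitSet G M H, w ≠ z := by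
  by_contra! hsingle
  have : Infinite M := infinite_space_of_mem_limitSet hzH
  obtain ⟨j, a, b, -, hab, hz, hne⟩ := hcon
  have hfix : ∀ h ∈ H, h • z = z := fun h hh =>
    hsingle _ (smul_mem_limitSet (hconv.1 h) hh hzH)
  obtain ⟨q, hq⟩ := (toFinite {z}).exists_notMem
  have hHq : ∀ h ∈ H, h • q ≠ z := fun h hh hhq =>
    hq (MulAction.injective h (hhq.trans (hfix h hh).symm))
  obtain ⟨c, hc⟩ := (toFinite {a, b}).exists_notMem
  simp only [mem_insert_iff, mem_singleton_iff, not_or] at hc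
  obtain ⟨A, B, hA, hB, haA, hbB, hAB⟩ := t2_separation hab
  obtain ⟨n, h, hh, hzA, hmaps⟩ := hconv.exists_mapsTo_conj (infinite_of_mem_limitSet hzH)
    (U := hyperfilter ℕ) (j := j) (z := z) (q := q) hab
    (fun h hh => by simpa only [hfix h hh] using hz.mono_left Nat.hyperfilter_le_atTop)
    (fun h hh => (hne _ (hHq h hh)).mono_left Nat.hyperfilter_le_atTop)
    ((hA.sdiff isClosed_singleton).mem_nhds ⟨haA, Ne.symm hc.1⟩)
    ((hB.sdiff isClosed_singleton).mem_nhds ⟨hbB, Ne.symm hc.2⟩)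
  refine not_limitSet_subset_of_mapsTo_compl (A := (j n • ·) ⁻¹' (A \ {c}))
    (B := (j n • ·) ⁻¹' (B \ {c})) (c := (j n)⁻¹ • c) hh
    ((hA.sdiff isClosed_singleton).preimage (hconv.1 _))
    ((hAB.mono sdiff_subset sdiff_subset).preimage _) (by simp) (by simp) ?_ ?_
  · intro x hx
    simpa [mul_smul] using hmaps (x := j n • x) hx
  · intro x hx
    exact (hsingle x hx).symm ▸ hzA

theorem DynamicallyQuasiconvex.exists_frequently_coset_eq [T25Space M]
    (hdqc : DynamicallyQuasiconvex G M H) {l : Filter ι} [l.NeBot] {g : ι → G} {w : M}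
    (hzH : z ∈ limitSet G M H) (hwH : w ∈ limitSet G M H) (hab : a ≠ b)
    (hz : Tendsto (fun i => g i • z) l (𝓝 a)) (hw : Tendsto (fun i => g i • w) l (𝓝 b)) :
    ∃ C : G ⧸ H, ∃ᶠ i in l, (g i : G ⧸ H) = C := by
  obtain ⟨A, haA, hA, B, hbB, hB, hAB⟩ := exists_open_nhds_disjoint_closure hab
  have hfin := hdqc _ _ isClosed_closure isClosed_closure hAB
  have hmeet := (hz.eventually (hA.mem_nhds haA)).and (hw.eventually (hB.mem_nhds hbB))
  obtain ⟨C, -, hC⟩ := (hfin.frequently_exists (p := fun C i => (g i : G ⧸ H) = C)).1 <|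
    hmeet.frequently.mono fun i ⟨hzA, hwB⟩ =>
    ⟨(g i : G ⧸ H), ⟨g i, ⟨⟨_, smul_mem_smul_set hzH, subset_closure hzA⟩,
      ⟨_, smul_mem_smul_set hwH, subset_closure hwB⟩⟩, rfl⟩, rfl⟩
  exact ⟨C, hC⟩

theorem IsConicalLimitPoint.inf_of_dynamicallyQuasiconvex [CompactSpace M] [T2Space M]
    (hconv : IsConvergenceAction G M) (hcon : IsConicalLimitPoint G M J z)
    (hdqc : DynamicallyQuasiconvex G M H) (hzH : z ∈ limitSet G M H) :
    IsConicalLimitPoint G M (H ⊓ J) z := by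
  obtain ⟨w, hwH, hwz⟩ := hcon.exists_mem_limitSet_ne hconv hzH
  obtain ⟨j, a, b, hj, hab, hz, hne⟩ := hcon
  obtain ⟨C, hC⟩ := hdqc.exists_frequently_coset_eq hzH hwH hab hz (hne w hwz)
  obtain ⟨φ, hφ, hφC⟩ := extraction_of_frequently_atTop hC
  have htend {x y : M} (h : Tendsto (fun n => j n • x) atTop (𝓝 y)) :
      Tendsto (fun n => ((j (φ 0))⁻¹ * j (φ n)) • x) atTop (𝓝 ((j (φ 0))⁻¹ • y)) := by
    simpa only [mul_smul, Function.comp_def] using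
      ((hconv.1 (j (φ 0))⁻¹).tendsto y).comp (h.comp hφ.tendsto_atTop)
  exact ⟨fun n => (j (φ 0))⁻¹ * j (φ n), _, _,
    fun n => ⟨QuotientGroup.eq.1 ((hφC 0).trans (hφC n).symm),
      J.mul_mem (J.inv_mem (hj _)) (hj _)⟩,
    (MulAction.injective _).ne hab, htend hz, fun q hq => htend (hne q hq)⟩

end Conical

theorem conical_limit_point_of_intersection_general
    {G M : Type*} [Group G] [TopologicalSpace M] [CompactSpace M] [T2Space M] [MulAction G M]
    (hconv : IsConvergenceAction G M) {H J : Subgroup G} (hdqc : DynamicallyQuasiconvex G M H)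
    {z : M} (hzH : z ∈ limitSet G M H) (hcon : IsConicalLimitPoint G M J z) :
    ((H ⊓ J : Subgroup G) : Set G).Infinite ∧
      IsConicalLimitPoint G M (H ⊓ J) z ∧
      z ∈ limitSet G M (H ⊓ J) := by
  have : Infinite M := infinite_space_of_mem_limitSet hzH
  have hconical := hcon.inf_of_dynamicallyQuasiconvex hconv hdqc hzH
  have hlimit := hconical.mem_limitSet hconv
  exact ⟨infinite_of_mem_limitSet hlimit, hconical, hlimit⟩

/-- if `H` is dynamically quasiconvex, `J` is infinite and
`z ∈ Λ(H) ∩ Λ(J)` is a conical limit point of `J`, then `H ∩ J` is infinite, `z` is a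
conical limit point of `H ∩ J`, and in particular `z ∈ Λ(H ∩ J)`. -/
theorem conical_limit_point_of_intersection
    {G M : Type*} [Group G] [TopologicalSpace M] [CompactSpace M]
    [TopologicalSpace.MetrizableSpace M] [MulAction G M]
    (hconv : IsConvergenceAction G M)
    (h3 : ∃ a b c : M, a ≠ b ∧ a ≠ c ∧ b ≠ c)
    (H J : Subgroup G) (hdqc : DynamicallyQuasiconvex G M H)
    (hJinf : (J : Set G).Infinite)
    (z : M) (hz : z ∈ limitSet G M H ∩ limitSet G M J)
    (hcon : IsConicalLimitPoint G M J z) :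
    ((H ⊓ J : Subgroup G) : Set G).Infinite ∧
      IsConicalLimitPoint G M (H ⊓ J) z ∧
      z ∈ limitSet G M (H ⊓ J) := by
  exact conical_limit_point_of_intersection_general hconv hdqc hz.1 hcon
end

section
/- Let G be a finitely generated group with nontrivial Floyd boundary ∂G, equipped with the convergence group action of G on ∂G, and let H be an undistorted finitely generated subgroup of G with |Λ(H)| ≥ 2 in ∂G. Then for any g ∈ G \ H, the inclusion gHg⁻¹ ⊆ H implies gHg⁻¹ = H. -/
open Pointwise Filter Topology Set

section Floyd

variable {G : Type*} [Group G]

/-- The word metric on `G` determined by a generating set `S`: the length of a shortest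
word over `S` representing `x⁻¹ * y`. -/
noncomputable def wordDist (S : Set G) (x y : G) : ℕ :=
  sInf {n : ℕ | ∃ l : List G, (∀ a ∈ l, a ∈ S) ∧ l.prod = x⁻¹ * y ∧ l.length = n}

/-- The Floyd length of the edge of the Cayley graph `Γ(G,S)` joining `x` and `y`:
the edge is rescaled by the factor `f(d_S(1,e)) = d_S(1,e)⁻²` (where `d_S(1,e)` is the
word distance from the identity to the edge, and edges at the identity keep length 1). -/
noncomputable def floydEdgeWeight (S : Set G) (x y : G) : ℝ :=
  ((max 1 (min (wordDist S 1 x) (wordDist S 1 y)) : ℕ) : ℝ)⁻¹ ^ 2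

/-- The Floyd length of an edge path in the Cayley graph, recorded as its list of
vertices: the sum of the rescaled lengths of its edges. -/
noncomputable def floydLength (S : Set G) : List G → ℝ
  | [] => 0
  | [_] => 0
  | a :: b :: l => floydEdgeWeight S a b + floydLength S (b :: l)

/-- `l` is (the list of vertices of) an edge path in the Cayley graph `Γ(G,S)` from `x`
to `y`: consecutive vertices are at word distance 1. -/
def IsEdgePath (S : Set G) (x y : G) (l : List G) : Prop :=
  l.head? = some x ∧ l.getLast? = some y ∧ List.Chain' (fun a b => wordDist S a b = 1) l

/-- The Floyd metric on `G`: the infimum of Floyd lengths of edge paths joining the two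
points. -/
noncomputable def floydDist (S : Set G) (x y : G) : ℝ :=
  sInf {r : ℝ | ∃ l : List G, IsEdgePath S x y l ∧ floydLength S l = r}

/-- The limit set in the Floyd completion `𝔾` (with `ι : G → 𝔾` the canonical map) of a
subgroup `H ≤ G`: the set of accumulation points of the `H`-orbits of points of `G`. -/
def floydLimitSet {𝔾 : Type*} [TopologicalSpace 𝔾] (ι : G → 𝔾) (H : Subgroup G) :
    Set 𝔾 :=
  {x : 𝔾 | ∃ g₀ : G, x ∈ closure (((fun h : G => ι (h * g₀)) '' (H : Set G)) \ {x})}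

/-- `H` (with finite generating set `T`) is undistorted in `G` (with finite generating
set `S`): the inclusion `(H, d_T) → (G, d_S)` is a quasi-isometric embedding. -/
def IsUndistorted (S T : Set G) (H : Subgroup G) : Prop :=
  ∃ ε : ℝ, 1 ≤ ε ∧ ∀ x ∈ H, ∀ y ∈ H,
    ε⁻¹ * (wordDist T x y : ℝ) - ε ≤ (wordDist S x y : ℝ) ∧
    (wordDist S x y : ℝ) ≤ ε * (wordDist T x y : ℝ) + ε

end Floyd

/-!
Karlsson's visibility lemma: since `∑ n⁻²` converges, a quasi-geodesic whose ends are a definite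
Floyd distance apart passes within a bounded distance of `1`. If `u * H * u⁻¹ ≤ H`, choose
`h, k ∈ H` such that `h * u⁻¹` and `k * u⁻¹` are close to two distinct limit points. A
quasi-geodesic of `H` from `u * h * u⁻¹` to `u * k * u⁻¹`, translated by `u⁻¹`, joins them, so the
coset `u⁻¹ * H` meets a fixed ball around `1`. Hence there are finitely many such cosets; applied to
the powers of `g` this puts some `g ^ k` with `k ≠ 0` in `H`, and the chain
`H = g ^ k * H * g⁻ᵏ ≤ ⋯ ≤ g * H * g⁻¹ ≤ H` collapses.
-/

section WordMetric

variable {G : Type*} [Group G] {S : Set G} {x y z : G}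

lemma submonoid_closure_eq_top (hsym : ∀ s ∈ S, s⁻¹ ∈ S) (hgen : Subgroup.closure S = ⊤) :
    Submonoid.closure S = ⊤ := by
  have hinv : S⁻¹ ⊆ S := fun s hs => by simpa only [inv_inv] using hsym _ hs
  rw [← union_eq_left.2 hinv, ← Subgroup.closure_toSubmonoid, hgen, Subgroup.top_toSubmonoid]

lemma inv_mul_mem_submonoid_closure (hS : Submonoid.closure S = ⊤) (x y : G) :
    x⁻¹ * y ∈ Submonoid.closure S :=
  hS ▸ Submonoid.mem_top _

lemma wordDist_le_length {l : List G} (hl : ∀ a ∈ l, a ∈ S) (hprod : l.prod = x⁻¹ * y) :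
    wordDist S x y ≤ l.length :=
  Nat.sInf_le ⟨l, hl, hprod, rfl⟩

lemma exists_word_length_eq_wordDist (h : x⁻¹ * y ∈ Submonoid.closure S) :
    ∃ l : List G, (∀ a ∈ l, a ∈ S) ∧ l.prod = x⁻¹ * y ∧ l.length = wordDist S x y := by
  obtain ⟨l, hl, hprod⟩ := Submonoid.exists_list_of_mem_closure h
  exact Nat.sInf_mem (s := {n | ∃ l : List G, (∀ a ∈ l, a ∈ S) ∧ l.prod = x⁻¹ * y ∧ l.length = n})
    ⟨l.length, l, hl, hprod, rfl⟩

lemma wordDist_eq_zero_of_notMem_closure (h : x⁻¹ * y ∉ Submonoid.closure S) :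
    wordDist S x y = 0 := by
  refine Nat.sInf_eq_zero.2 (.inr (eq_empty_of_forall_notMem ?_))
  rintro _ ⟨l, hl, hprod, -⟩
  exact h (hprod ▸ list_prod_mem fun a ha => Submonoid.subset_closure (hl a ha))

lemma wordDist_mul_left (g x y : G) : wordDist S (g * x) (g * y) = wordDist S x y := by
  simp only [wordDist, mul_inv_rev, mul_assoc, inv_mul_cancel_left]

lemma wordDist_triangle (hxy : x⁻¹ * y ∈ Submonoid.closure S)
    (hyz : y⁻¹ * z ∈ Submonoid.closure S) :
    wordDist S x z ≤ wordDist S x y + wordDist S y z := by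
  obtain ⟨l, hl, hprod, hlen⟩ := exists_word_length_eq_wordDist hxy
  obtain ⟨l', hl', hprod', hlen'⟩ := exists_word_length_eq_wordDist hyz
  rw [← hlen, ← hlen', ← List.length_append]
  refine wordDist_le_length (fun a ha => (List.mem_append.1 ha).elim (hl a) (hl' a)) ?_
  rw [List.prod_append, hprod, hprod']
  group

lemma wordDist_comm (hsym : ∀ s ∈ S, s⁻¹ ∈ S) (x y : G) : wordDist S x y = wordDist S y x := by
  have reverse_words : ∀ x y : G,
      {n | ∃ l : List G, (∀ a ∈ l, a ∈ S) ∧ l.prod = x⁻¹ * y ∧ l.length = n} ⊆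
        {n | ∃ l : List G, (∀ a ∈ l, a ∈ S) ∧ l.prod = y⁻¹ * x ∧ l.length = n} := by
    rintro x y _ ⟨l, hl, hprod, rfl⟩
    refine ⟨(l.map (·⁻¹)).reverse, fun a ha => ?_, ?_, by simp⟩
    · obtain ⟨b, hb, rfl⟩ := List.mem_map.1 (List.mem_reverse.1 ha)
      exact hsym b (hl b hb)
    · rw [← List.prod_inv_reverse, hprod, mul_inv_rev, inv_inv]
  exact congrArg sInf ((reverse_words x y).antisymm (reverse_words y x))

lemma finite_setOf_wordDist_lt (hfin : S.Finite) (hS : Submonoid.closure S = ⊤) (R : ℕ) :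
    {x : G | wordDist S 1 x < R}.Finite := by
  have : Finite S := hfin.to_subtype
  refine ((List.finite_length_lt S R).image fun l => (l.map Subtype.val).prod).subset fun x hx => ?_
  obtain ⟨l, hl, hprod, hlen⟩ :=
    exists_word_length_eq_wordDist (inv_mul_mem_submonoid_closure hS 1 x)
  lift l to List S using hl
  rw [List.length_map] at hlen
  exact ⟨l, hlen.trans_lt hx, by simpa only [inv_one, one_mul] using hprod⟩

lemma exists_geodesic (h : x⁻¹ * y ∈ Submonoid.closure S) :
    ∃ p : ℕ → G, p 0 = x ∧ p (wordDist S x y) = y ∧ ∀ i j, i ≤ j → j ≤ wordDist S x y →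
      (p i)⁻¹ * p j ∈ Submonoid.closure S ∧ wordDist S (p i) (p j) = j - i := by
  obtain ⟨l, hl, hprod, hlen⟩ := exists_word_length_eq_wordDist h
  let p : ℕ → G := fun i => x * (l.take i).prod
  have hp_zero : p 0 = x := by simp [p]
  have hp_end : p (wordDist S x y) = y := by simp [p, ← hlen, hprod]
  have hletter (i j : ℕ) : ∀ a ∈ (l.take j).drop i, a ∈ S :=
    fun a ha => hl a (List.mem_of_mem_take (List.mem_of_mem_drop ha))
  have hsegment {i j : ℕ} (hij : i ≤ j) : ((l.take j).drop i).prod = (p i)⁻¹ * p j := by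
    have := List.prod_take_mul_prod_drop (l.take j) i
    rw [List.take_take, min_eq_left hij] at this
    simp only [p, ← this]
    group
  have hmem {i j : ℕ} (hij : i ≤ j) : (p i)⁻¹ * p j ∈ Submonoid.closure S :=
    hsegment hij ▸ list_prod_mem fun a ha => Submonoid.subset_closure (hletter i j a ha)
  have hle {i j : ℕ} (hij : i ≤ j) : wordDist S (p i) (p j) ≤ j - i :=
    (wordDist_le_length (hletter i j) (hsegment hij)).trans (by grind)
  refine ⟨p, hp_zero, hp_end, fun i j hij hj => ⟨hmem hij, (hle hij).antisymm ?_⟩⟩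
  have hsplit := (wordDist_triangle (hmem i.zero_le) (hmem (hij.trans hj))).trans
    (Nat.add_le_add_left (wordDist_triangle (hmem hij) (hmem hj)) _)
  rw [hp_zero, hp_end] at hsplit
  have hstart := hle i.zero_le
  have hend := hle hj
  rw [hp_zero] at hstart
  rw [hp_end] at hend
  omega

end WordMetric

section FloydMetric

variable {G : Type*} [Group G] {S : Set G} {x y z : G}

lemma floydEdgeWeight_nonneg (S : Set G) (x y : G) : 0 ≤ floydEdgeWeight S x y :=
  sq_nonneg _

lemma floydEdgeWeight_le_inv_sq {r : ℝ} (hr : 0 < r) (hx : r ≤ wordDist S 1 x)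
    (hy : r ≤ wordDist S 1 y) : floydEdgeWeight S x y ≤ (r ^ 2)⁻¹ := by
  have hmax : r ≤ (max 1 (min (wordDist S 1 x) (wordDist S 1 y)) : ℕ) := by
    push_cast
    exact le_max_of_le_right (le_min hx hy)
  rw [floydEdgeWeight, inv_pow]
  gcongr

lemma floydLength_nonneg (S : Set G) : ∀ l : List G, 0 ≤ floydLength S l
  | [] => le_rfl
  | [_] => le_rfl
  | a :: b :: l => add_nonneg (floydEdgeWeight_nonneg S a b) (floydLength_nonneg S (b :: l))

lemma floydLength_append_cons (S : Set G) (b : G) (l' : List G) : ∀ l : List G,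
    floydLength S (l ++ b :: l') = floydLength S (l ++ [b]) + floydLength S (b :: l')
  | [] => by simp [floydLength]
  | [a] => by simp [floydLength]
  | a :: c :: l => by
    simpa [floydLength, add_assoc] using floydLength_append_cons S b l' (c :: l)

lemma floydDist_le_floydLength {l : List G} (hl : IsEdgePath S x y l) :
    floydDist S x y ≤ floydLength S l :=
  csInf_le ⟨0, by rintro _ ⟨l, -, rfl⟩; exact floydLength_nonneg S l⟩ ⟨l, hl, rfl⟩

lemma floydDist_self_le (S : Set G) (x : G) : floydDist S x x ≤ 0 :=
  floydDist_le_floydLength (l := [x]) ⟨rfl, rfl, List.isChain_singleton x⟩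

lemma floydDist_le_floydEdgeWeight (h : wordDist S x y = 1) :
    floydDist S x y ≤ floydEdgeWeight S x y := by
  have hpath : IsEdgePath S x y [x, y] := ⟨rfl, rfl, List.isChain_pair.2 h⟩
  simpa only [floydLength, add_zero] using floydDist_le_floydLength hpath

lemma exists_isEdgePath (hS : Submonoid.closure S = ⊤) (x y : G) :
    ∃ l : List G, IsEdgePath S x y l := by
  obtain ⟨p, hp_zero, hp_end, hp⟩ := exists_geodesic (inv_mul_mem_submonoid_closure hS x y)
  refine ⟨(List.range (wordDist S x y + 1)).map p, ?_, ?_, ?_⟩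
  · simp [List.head?_range, hp_zero]
  · simp [List.getLast?_range, hp_end]
  · refine (List.isChain_map p).2 ((List.isChain_range_succ _ _).2 fun i hi => ?_)
    rw [(hp i (i + 1) i.le_succ hi).2, Nat.add_sub_cancel_left]

lemma le_floydDist (hS : Submonoid.closure S = ⊤) {c : ℝ}
    (h : ∀ l, IsEdgePath S x y l → c ≤ floydLength S l) : c ≤ floydDist S x y := by
  obtain ⟨l, hl⟩ := exists_isEdgePath hS x y
  refine le_csInf ⟨_, l, hl, rfl⟩ ?_
  rintro _ ⟨l, hl, rfl⟩
  exact h l hl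

lemma floydDist_triangle (hS : Submonoid.closure S = ⊤) (x y z : G) :
    floydDist S x z ≤ floydDist S x y + floydDist S y z := by
  have hconcat : ∀ l l', IsEdgePath S x y l → IsEdgePath S y z l' →
      floydDist S x z ≤ floydLength S l + floydLength S l' := by
    rintro l l' ⟨hhead, hlast, hchain⟩ ⟨hhead', hlast', hchain'⟩
    obtain ⟨l, rfl⟩ := List.getLast?_eq_some_iff.1 hlast
    obtain ⟨l', rfl⟩ := List.head?_eq_some_iff.1 hhead'
    rw [← floydLength_append_cons]
    refine floydDist_le_floydLength ⟨?_, ?_, List.isChain_split.2 ⟨hchain, hchain'⟩⟩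
    · rw [← hhead]
      cases l <;> rfl
    · rw [List.getLast?_append_cons, hlast']
  rw [← sub_le_iff_le_add]
  refine le_floydDist hS fun l hl => ?_
  rw [sub_le_comm]
  exact le_floydDist hS fun l' hl' => sub_le_iff_le_add'.2 (hconcat l l' hl hl')

lemma floydDist_le_sum (hS : Submonoid.closure S = ⊤) (p : ℕ → G) (n : ℕ) :
    floydDist S (p 0) (p n) ≤ ∑ i ∈ Finset.range n, floydDist S (p i) (p (i + 1)) := by
  induction n with
  | zero => exact floydDist_self_le S (p 0)
  | succ n ih =>
    rw [Finset.sum_range_succ]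
    exact (floydDist_triangle hS _ (p n) _).trans (by gcongr)

lemma floydDist_le_div_sq (hsym : ∀ s ∈ S, s⁻¹ ∈ S) (hS : Submonoid.closure S = ⊤) {r : ℝ}
    (hr : 0 < r) (h : r + wordDist S x y ≤ wordDist S 1 x) :
    floydDist S x y ≤ wordDist S x y / r ^ 2 := by
  obtain ⟨p, hp_zero, hp_end, hp⟩ := exists_geodesic (inv_mul_mem_submonoid_closure hS x y)
  have hfar : ∀ i ≤ wordDist S x y, r ≤ wordDist S 1 (p i) := by
    intro i hi
    have hback : wordDist S (p i) x ≤ wordDist S x y := by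
      rw [wordDist_comm hsym, ← hp_zero, (hp 0 i i.zero_le hi).2, hp_zero]
      exact (Nat.sub_le i 0).trans hi
    have htri : wordDist S 1 x ≤ wordDist S 1 (p i) + wordDist S x y :=
      (wordDist_triangle (inv_mul_mem_submonoid_closure hS _ _)
        (inv_mul_mem_submonoid_closure hS _ _)).trans (Nat.add_le_add_left hback _)
    have : (wordDist S 1 x : ℝ) ≤ wordDist S 1 (p i) + wordDist S x y := mod_cast htri
    linarith
  have hedge : ∀ i ∈ Finset.range (wordDist S x y),
      floydDist S (p i) (p (i + 1)) ≤ (r ^ 2)⁻¹ := by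
    intro i hi
    rw [Finset.mem_range] at hi
    refine (floydDist_le_floydEdgeWeight ?_).trans
      (floydEdgeWeight_le_inv_sq hr (hfar i hi.le) (hfar (i + 1) hi))
    rw [(hp i (i + 1) i.le_succ hi).2, Nat.add_sub_cancel_left]
  calc floydDist S x y = floydDist S (p 0) (p (wordDist S x y)) := by rw [hp_zero, hp_end]
    _ ≤ ∑ i ∈ Finset.range (wordDist S x y), floydDist S (p i) (p (i + 1)) :=
        floydDist_le_sum hS p _
    _ ≤ Finset.card (Finset.range (wordDist S x y)) • (r ^ 2)⁻¹ :=
        Finset.sum_le_card_nsmul _ _ _ hedge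
    _ = wordDist S x y / r ^ 2 := by rw [Finset.card_range, nsmul_eq_mul, div_eq_mul_inv]

lemma floydDist_le_four_mul_div_sq (hsym : ∀ s ∈ S, s⁻¹ ∈ S) (hS : Submonoid.closure S = ⊤)
    {L : ℕ} (hxy : wordDist S x y ≤ L) (hpos : 0 < wordDist S 1 x)
    (hfar : 2 * L ≤ wordDist S 1 x) :
    floydDist S x y ≤ 4 * L / (wordDist S 1 x : ℝ) ^ 2 := by
  have hpos' : (0 : ℝ) < wordDist S 1 x := mod_cast hpos
  have hxy' : (wordDist S x y : ℝ) ≤ L := mod_cast hxy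
  have hfar' : 2 * (L : ℝ) ≤ wordDist S 1 x := mod_cast hfar
  calc floydDist S x y ≤ wordDist S x y / (wordDist S 1 x / 2 : ℝ) ^ 2 :=
        floydDist_le_div_sq hsym hS (half_pos hpos') (by linarith)
    _ ≤ L / (wordDist S 1 x / 2 : ℝ) ^ 2 := by gcongr
    _ = 4 * L / (wordDist S 1 x : ℝ) ^ 2 := by field_simp; norm_num

end FloydMetric

section Sums

lemma sum_range_inv_add_sq_le {r : ℕ} (hr : 0 < r) (n : ℕ) :
    ∑ k ∈ Finset.range n, (((r + k : ℕ) : ℝ) ^ 2)⁻¹ ≤ 2 / r := by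
  obtain ⟨m, rfl⟩ := Nat.exists_eq_succ_of_ne_zero hr.ne'
  have hIco : Finset.Ico (m + 1) (m + 1 + n) = Finset.Ioo m (m + 1 + n) := by
    ext
    simp
  have hsum := sum_Ioo_inv_sq_le (α := ℝ) m (m + 1 + n)
  rw [← hIco, Finset.sum_Ico_eq_sum_range, Nat.add_sub_cancel_left] at hsum
  exact_mod_cast hsum

lemma sum_range_comp_dist_le {M : Type*} [AddCommMonoid M] [PartialOrder M] [IsOrderedAddMonoid M]
    {f : ℕ → M} (hf : ∀ k, 0 ≤ f k) {m n : ℕ} (hmn : m ≤ n) :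
    ∑ i ∈ Finset.range n, f (Nat.dist i m) ≤ 2 • ∑ k ∈ Finset.range (n + 1), f k := by
  obtain ⟨d, rfl⟩ := Nat.exists_eq_add_of_le hmn
  have hmono {a b : ℕ} (hab : a ≤ b) : ∑ k ∈ Finset.range a, f k ≤ ∑ k ∈ Finset.range b, f k :=
    Finset.sum_le_sum_of_subset_of_nonneg (Finset.range_mono hab) fun k _ _ => hf k
  rw [Finset.sum_range_add, two_nsmul]
  gcongr
  · calc ∑ i ∈ Finset.range m, f (Nat.dist i m)
        = ∑ i ∈ Finset.range m, f (m - 1 - i + 1) := by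
          refine Finset.sum_congr rfl fun i hi => congrArg f ?_
          rw [Finset.mem_range] at hi
          rw [Nat.dist_eq_sub_of_le hi.le]
          omega
      _ = ∑ k ∈ Finset.range m, f (k + 1) := Finset.sum_range_reflect (fun k => f (k + 1)) m
      _ ≤ ∑ k ∈ Finset.range (m + 1), f k := by
          rw [Finset.sum_range_succ']
          exact le_add_of_nonneg_right (hf 0)
      _ ≤ ∑ k ∈ Finset.range (m + d + 1), f k := hmono (by omega)
  · calc ∑ i ∈ Finset.range d, f (Nat.dist (m + i) m) = ∑ k ∈ Finset.range d, f k :=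
          Finset.sum_congr rfl fun i _ => by
            rw [Nat.dist_eq_sub_of_le_right (Nat.le_add_right m i), Nat.add_sub_cancel_left]
      _ ≤ ∑ k ∈ Finset.range (m + d + 1), f k := hmono (by omega)

end Sums

section Visibility

variable {G : Type*} [Group G] {S : Set G} {K n : ℕ} {y : ℕ → G}

/-- `y 0, …, y n` is a discrete quasi-geodesic of `(G, d_S)`. A single natural number `K` serves as
the bound on the jumps and as both the multiplicative and the additive constant. -/
structure IsQuasiGeodesic (S : Set G) (K n : ℕ) (y : ℕ → G) : Prop where
  wordDist_succ_le : ∀ i < n, wordDist S (y i) (y (i + 1)) ≤ K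
  sub_le : ∀ i j, i ≤ j → j ≤ n → j - i ≤ K * (wordDist S (y i) (y j) + 1)

namespace IsQuasiGeodesic

lemma mul_left (hy : IsQuasiGeodesic S K n y) (g : G) :
    IsQuasiGeodesic S K n (fun i => g * y i) where
  wordDist_succ_le i hi := (wordDist_mul_left g _ _).trans_le (hy.wordDist_succ_le i hi)
  sub_le i j hij hj := by
    rw [wordDist_mul_left]
    exact hy.sub_le i j hij hj

lemma of_jump {a b : G} (hK : 0 < K) (hab : wordDist S a b ≤ K) :
    IsQuasiGeodesic S K 1 (fun i => if i = 0 then a else b) where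
  wordDist_succ_le i hi := by
    obtain rfl := Nat.lt_one_iff.1 hi
    exact hab
  sub_le i j _ hj := (Nat.sub_le j i).trans (hj.trans (Nat.mul_pos hK (Nat.succ_pos _)))

lemma dist_le (hsym : ∀ s ∈ S, s⁻¹ ∈ S) (hy : IsQuasiGeodesic S K n y) {i j : ℕ} (hi : i ≤ n)
    (hj : j ≤ n) : Nat.dist i j ≤ K * (wordDist S (y i) (y j) + 1) := by
  rcases le_total i j with hij | hji
  · rw [Nat.dist_eq_sub_of_le hij]
    exact hy.sub_le i j hij hj
  · rw [Nat.dist_eq_sub_of_le_right hji, wordDist_comm hsym]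
    exact hy.sub_le j i hji hi

-- `m` indexes the point nearest to `1`, which bounds `wordDist S (y i) (y m)` by twice
-- `wordDist S 1 (y i)`.
lemma exists_add_dist_le (hsym : ∀ s ∈ S, s⁻¹ ∈ S) (hS : Submonoid.closure S = ⊤)
    (hy : IsQuasiGeodesic S K n y) {R : ℕ} (hR : 0 < R)
    (hfar : ∀ i ≤ n, R ≤ wordDist S 1 (y i)) :
    ∃ m ≤ n, ∀ i ≤ n, R + Nat.dist i m ≤ (3 * K + 1) * wordDist S 1 (y i) := by
  obtain ⟨m, hm, hmin⟩ := Finset.exists_min_image (Finset.range (n + 1))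
    (fun i => wordDist S 1 (y i)) ⟨0, by simp⟩
  simp only [Finset.mem_range, Nat.lt_succ_iff] at hm hmin
  refine ⟨m, hm, fun i hi => ?_⟩
  have htri : wordDist S (y i) (y m) ≤ wordDist S 1 (y i) + wordDist S 1 (y m) := by
    rw [wordDist_comm hsym 1 (y i)]
    exact wordDist_triangle (inv_mul_mem_submonoid_closure hS _ _)
      (inv_mul_mem_submonoid_closure hS _ _)
  have hthree : wordDist S (y i) (y m) + 1 ≤ 3 * wordDist S 1 (y i) := by
    have := hmin i hi
    have := hfar i hi
    omega
  calc R + Nat.dist i m ≤ wordDist S 1 (y i) + K * (3 * wordDist S 1 (y i)) :=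
        add_le_add (hfar i hi) ((hy.dist_le hsym hi hm).trans (Nat.mul_le_mul_left K hthree))
    _ = (3 * K + 1) * wordDist S 1 (y i) := by ring

lemma floydDist_le (hsym : ∀ s ∈ S, s⁻¹ ∈ S) (hS : Submonoid.closure S = ⊤)
    (hy : IsQuasiGeodesic S K n y) {R : ℕ} (hR : 0 < R) (hKR : 2 * K ≤ R)
    (hfar : ∀ i ≤ n, R ≤ wordDist S 1 (y i)) :
    floydDist S (y 0) (y n) ≤ 16 * K * (3 * K + 1) ^ 2 / R := by
  obtain ⟨m, hm, hlow⟩ := hy.exists_add_dist_le hsym hS hR hfar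
  let C : ℝ := 4 * K * (3 * K + 1) ^ 2
  have hstep : ∀ i ∈ Finset.range n,
      floydDist S (y i) (y (i + 1)) ≤ C * (((R + Nat.dist i m : ℕ) : ℝ) ^ 2)⁻¹ := by
    intro i hi
    rw [Finset.mem_range] at hi
    have hw : 0 < wordDist S 1 (y i) := hR.trans_le (hfar i hi.le)
    have hlow' : ((R + Nat.dist i m : ℕ) : ℝ) ≤ (3 * K + 1) * wordDist S 1 (y i) :=
      mod_cast hlow i hi.le
    have : (0 : ℝ) < (R + Nat.dist i m : ℕ) := mod_cast hR.trans_le (Nat.le_add_right _ _)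
    have : (0 : ℝ) < wordDist S 1 (y i) := mod_cast hw
    calc floydDist S (y i) (y (i + 1)) ≤ 4 * K / (wordDist S 1 (y i) : ℝ) ^ 2 :=
          floydDist_le_four_mul_div_sq hsym hS (hy.wordDist_succ_le i hi) hw
            (hKR.trans (hfar i hi.le))
      _ = C / ((3 * K + 1) * wordDist S 1 (y i)) ^ 2 := by simp only [C]; field_simp
      _ ≤ C / ((R + Nat.dist i m : ℕ) : ℝ) ^ 2 := by gcongr
      _ = C * (((R + Nat.dist i m : ℕ) : ℝ) ^ 2)⁻¹ := div_eq_mul_inv _ _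
  calc floydDist S (y 0) (y n)
      ≤ ∑ i ∈ Finset.range n, C * (((R + Nat.dist i m : ℕ) : ℝ) ^ 2)⁻¹ :=
        (floydDist_le_sum hS y n).trans (Finset.sum_le_sum hstep)
    _ ≤ C * (2 • (2 / R)) := by
        rw [← Finset.mul_sum]
        gcongr
        exact (sum_range_comp_dist_le (f := fun k => (((R + k : ℕ) : ℝ) ^ 2)⁻¹)
          (fun k => by positivity) hm).trans
          (nsmul_le_nsmul_right (sum_range_inv_add_sq_le hR (n + 1)) 2)
    _ = 16 * K * (3 * K + 1) ^ 2 / R := by simp only [C, two_nsmul]; ring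

end IsQuasiGeodesic

lemma exists_forall_isQuasiGeodesic_wordDist_lt (hsym : ∀ s ∈ S, s⁻¹ ∈ S)
    (hS : Submonoid.closure S = ⊤) (K : ℕ) {δ : ℝ} (hδ : 0 < δ) :
    ∃ R : ℕ, ∀ (n : ℕ) (y : ℕ → G), IsQuasiGeodesic S K n y → δ ≤ floydDist S (y 0) (y n) →
      ∃ i ≤ n, wordDist S 1 (y i) < R := by
  obtain ⟨N, hN⟩ := exists_nat_gt (16 * K * (3 * K + 1) ^ 2 / δ : ℝ)
  refine ⟨N + 2 * K + 1, fun n y hy hends => ?_⟩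
  by_contra! hfar
  refine (hy.floydDist_le hsym hS (by omega) (by omega) hfar).not_gt (hends.trans_lt' ?_)
  rw [div_lt_comm₀ (by positivity) hδ]
  push_cast
  linarith

end Visibility

section LimitSet

lemma mem_closure_diff_of_finite {X : Type*} [TopologicalSpace X] [T1Space X] {A F : Set X} {p : X}
    (hp : p ∈ closure (A \ {p})) (hF : F.Finite) : p ∈ closure (A \ F) := by
  have hcover : A \ {p} ⊆ A \ F ∪ F \ {p} := fun x hx =>
    (em (x ∈ F)).elim (fun h => .inr ⟨h, hx.2⟩) fun h => .inl ⟨hx.1, h⟩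
  have hmem := closure_mono hcover hp
  rw [closure_union, hF.sdiff.isClosed.closure_eq] at hmem
  exact hmem.resolve_right fun h => h.2 rfl

variable {G : Type*} [Group G] {S : Set G} {H : Subgroup G}
  {𝔾 : Type*} [MetricSpace 𝔾] {ι : G → 𝔾}

-- Right multiplication moves points by a bounded word distance, hence by a small Floyd distance far
-- from `1`, so the limit set does not depend on the orbit.
lemma mem_closure_orbit_of_mem_floydLimitSet (hfin : S.Finite) (hsym : ∀ s ∈ S, s⁻¹ ∈ S)
    (hS : Submonoid.closure S = ⊤) (hdist : ∀ x y, dist (ι x) (ι y) = floydDist S x y) {p : 𝔾}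
    (hp : p ∈ floydLimitSet ι H) (u : G) :
    p ∈ closure ((fun h : G => ι (h * u)) '' (H : Set G)) := by
  obtain ⟨g₀, hg₀⟩ := hp
  refine Metric.mem_closure_iff.2 fun e he => ?_
  let L := wordDist S g₀ u
  obtain ⟨r, hr⟩ := exists_nat_gt (4 * L / (e / 2) : ℝ)
  have hball := (finite_setOf_wordDist_lt hfin hS (r + 2 * L + 1)).image ι
  obtain ⟨_, ⟨⟨h, hh, rfl⟩, hout⟩, hnear⟩ :=
    Metric.mem_closure_iff.1 (mem_closure_diff_of_finite hg₀ hball) (e / 2) (half_pos he)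
  have hfar : r + 2 * L + 1 ≤ wordDist S 1 (h * g₀) :=
    not_lt.1 fun hlt => hout ⟨_, hlt, rfl⟩
  have hfar' : (r : ℝ) + 1 ≤ wordDist S 1 (h * g₀) := by
    exact_mod_cast (by omega : r + 1 ≤ wordDist S 1 (h * g₀))
  have hmove : dist (ι (h * g₀)) (ι (h * u)) < e / 2 := by
    rw [hdist]
    calc floydDist S (h * g₀) (h * u) ≤ 4 * L / (wordDist S 1 (h * g₀) : ℝ) ^ 2 :=
          floydDist_le_four_mul_div_sq hsym hS (wordDist_mul_left h g₀ u).le (by omega) (by omega)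
      _ ≤ 4 * L / (r + 1) := by
          gcongr
          nlinarith [r.cast_nonneg (α := ℝ)]
      _ < e / 2 := by
          rw [div_lt_comm₀ (by positivity) (half_pos he)]
          linarith
  exact ⟨ι (h * u), ⟨h, hh, rfl⟩, by linarith [dist_triangle p (ι (h * g₀)) (ι (h * u))]⟩

end LimitSet

section Undistorted

variable {G : Type*} [Group G] {S T : Set G} {H : Subgroup G}

lemma IsUndistorted.exists_isQuasiGeodesic (hund : IsUndistorted S T H) (hTH : T ⊆ H) :
    ∃ K : ℕ, ∀ a ∈ H, ∀ b ∈ H, ∃ (n : ℕ) (p : ℕ → G),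
      p 0 = a ∧ p n = b ∧ (∀ i ≤ n, p i ∈ H) ∧ IsQuasiGeodesic S K n p := by
  obtain ⟨ε, hε, hqi⟩ := hund
  obtain ⟨K, hK⟩ := exists_nat_ge (2 * ε ^ 2)
  have hK_pos : 0 < K := by
    have : (0 : ℝ) < K := hK.trans_lt' (by positivity)
    exact_mod_cast this
  have hjump {a b : G} (ha : a ∈ H) (hb : b ∈ H) (hT : wordDist T a b ≤ 1) :
      wordDist S a b ≤ K := by
    have hT' : (wordDist T a b : ℝ) ≤ 1 := mod_cast hT
    have : (wordDist S a b : ℝ) ≤ K := by nlinarith [(hqi a ha b hb).2]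
    exact_mod_cast this
  have hexpand {a b : G} (ha : a ∈ H) (hb : b ∈ H) :
      wordDist T a b ≤ K * (wordDist S a b + 1) := by
    have hle : (wordDist T a b : ℝ) ≤ ε * (wordDist S a b + ε) :=
      (inv_mul_le_iff₀ (by positivity)).1 (sub_le_iff_le_add.1 (hqi a ha b hb).1)
    have : (wordDist T a b : ℝ) ≤ K * (wordDist S a b + 1) := by
      nlinarith [mul_le_mul_of_nonneg_right hK (wordDist S a b).cast_nonneg,
        mul_nonneg (sub_nonneg.2 hε) (wordDist S a b).cast_nonneg]
    exact_mod_cast this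
  refine ⟨K, fun a ha b hb => ?_⟩
  by_cases hab : a⁻¹ * b ∈ Submonoid.closure T
  · obtain ⟨p, hp_zero, hp_end, hp⟩ := exists_geodesic hab
    have hpH : ∀ i ≤ wordDist T a b, p i ∈ H := fun i hi => by
      have hmem := (Submonoid.closure_le (S := H.toSubmonoid)).2 hTH (hp 0 i i.zero_le hi).1
      rwa [hp_zero, Subgroup.mem_toSubmonoid, H.mul_mem_cancel_left (H.inv_mem ha)] at hmem
    refine ⟨wordDist T a b, p, hp_zero, hp_end, hpH, fun i hi => ?_, fun i j hij hj => ?_⟩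
    · exact hjump (hpH i hi.le) (hpH (i + 1) hi) (by rw [(hp i (i + 1) i.le_succ hi).2]; omega)
    · rw [← (hp i j hij hj).2]
      exact hexpand (hpH i (hij.trans hj)) (hpH j hj)
  · -- As `T` need not be symmetric, `wordDist T a b` may be the junk value `0`; then a single jump
    -- joins `a` to `b`.
    have hjump := hjump ha hb (by rw [wordDist_eq_zero_of_notMem_closure hab]; exact zero_le_one)
    refine ⟨1, fun i => if i = 0 then a else b, rfl, rfl, fun i _ => ?_, .of_jump hK_pos hjump⟩
    dsimp only
    split_ifs <;> assumption

variable {𝔾 : Type*} [MetricSpace 𝔾] {ι : G → 𝔾}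

lemma IsUndistorted.exists_forall_conj_smul_le_wordDist_lt (hfin : S.Finite)
    (hsym : ∀ s ∈ S, s⁻¹ ∈ S) (hS : Submonoid.closure S = ⊤)
    (hdist : ∀ x y, dist (ι x) (ι y) = floydDist S x y) (hund : IsUndistorted S T H) (hTH : T ⊆ H)
    (hΛ : (floydLimitSet ι H).Nontrivial) :
    ∃ R : ℕ, ∀ u : G, MulAut.conj u • H ≤ H → ∃ x ∈ H, wordDist S 1 (u⁻¹ * x) < R := by
  obtain ⟨p, hp, q, hq, hpq⟩ := hΛ
  have hδ : 0 < dist p q / 2 := half_pos (dist_pos.2 hpq)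
  obtain ⟨K, hK⟩ := hund.exists_isQuasiGeodesic hTH
  obtain ⟨R, hR⟩ := exists_forall_isQuasiGeodesic_wordDist_lt hsym hS K hδ
  refine ⟨R, fun u hu => ?_⟩
  have hconj : ∀ x ∈ H, u * x * u⁻¹ ∈ H :=
    fun x hx => hu (Subgroup.smul_mem_pointwise_smul x (MulAut.conj u) H hx)
  obtain ⟨_, ⟨h, hh, rfl⟩, hhp⟩ := Metric.mem_closure_iff.1
    (mem_closure_orbit_of_mem_floydLimitSet hfin hsym hS hdist hp u⁻¹) _ (half_pos hδ)
  obtain ⟨_, ⟨k, hk, rfl⟩, hkq⟩ := Metric.mem_closure_iff.1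
    (mem_closure_orbit_of_mem_floydLimitSet hfin hsym hS hdist hq u⁻¹) _ (half_pos hδ)
  obtain ⟨n, y, hy_zero, hy_end, hyH, hy⟩ := hK _ (hconj h hh) _ (hconj k hk)
  have hends : dist p q / 2 ≤ floydDist S (u⁻¹ * y 0) (u⁻¹ * y n) := by
    rw [hy_zero, hy_end, mul_assoc u, mul_assoc u, inv_mul_cancel_left, inv_mul_cancel_left,
      ← hdist]
    linarith [dist_triangle4_right p q (ι (h * u⁻¹)) (ι (k * u⁻¹))]
  obtain ⟨i, hi, hlt⟩ := hR n _ (hy.mul_left u⁻¹) hends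
  exact ⟨y i, hyH i hi, hlt⟩

lemma IsUndistorted.finite_cosets_conj_smul_le (hfin : S.Finite) (hsym : ∀ s ∈ S, s⁻¹ ∈ S)
    (hS : Submonoid.closure S = ⊤) (hdist : ∀ x y, dist (ι x) (ι y) = floydDist S x y)
    (hund : IsUndistorted S T H) (hTH : T ⊆ H) (hΛ : (floydLimitSet ι H).Nontrivial) :
    ((fun u : G => ((u⁻¹ : G) : G ⧸ H)) '' {u | MulAut.conj u • H ≤ H}).Finite := by
  obtain ⟨R, hR⟩ := hund.exists_forall_conj_smul_le_wordDist_lt hfin hsym hS hdist hTH hΛ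
  refine ((finite_setOf_wordDist_lt hfin hS R).image ((↑) : G → G ⧸ H)).subset ?_
  rintro _ ⟨u, hu, rfl⟩
  obtain ⟨x, hx, hlt⟩ := hR u hu
  exact ⟨u⁻¹ * x, hlt, QuotientGroup.mk_mul_of_mem _ hx⟩

end Undistorted

section Conjugates

variable {G : Type*} [Group G] {H : Subgroup G} {g : G}

lemma conj_pow_smul_le (hg : MulAut.conj g • H ≤ H) (n : ℕ) : MulAut.conj (g ^ n) • H ≤ H := by
  induction n with
  | zero => rw [pow_zero, map_one, one_smul]
  | succ n ih =>
    rw [pow_succ', map_mul, mul_smul]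
    exact (Subgroup.pointwise_smul_le_pointwise_smul_iff.2 ih).trans hg

lemma conj_smul_eq_of_pow_mem (hg : MulAut.conj g • H ≤ H) {k : ℕ} (hk : k ≠ 0)
    (hmem : g ^ k ∈ H) : MulAut.conj g • H = H := by
  obtain ⟨n, rfl⟩ := Nat.exists_eq_succ_of_ne_zero hk
  refine hg.antisymm ?_
  calc H = MulAut.conj g • MulAut.conj (g ^ n) • H := by
        rw [← mul_smul, ← map_mul, ← pow_succ', Subgroup.conj_smul_eq_self_of_mem hmem]
    _ ≤ MulAut.conj g • H :=
        Subgroup.pointwise_smul_le_pointwise_smul_iff.2 (conj_pow_smul_le hg n)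

lemma conj_smul_eq_of_finite_cosets
    (hfin : ((fun u : G => ((u⁻¹ : G) : G ⧸ H)) '' {u | MulAut.conj u • H ≤ H}).Finite)
    (hg : MulAut.conj g • H ≤ H) : MulAut.conj g • H = H := by
  have hpow (n : ℕ) : (((g ^ n)⁻¹ : G) : G ⧸ H) ∈
      (fun u : G => ((u⁻¹ : G) : G ⧸ H)) '' {u | MulAut.conj u • H ≤ H} :=
    ⟨g ^ n, conj_pow_smul_le hg n, rfl⟩
  obtain ⟨m, n, hmn, hcoset⟩ := hfin.exists_lt_map_eq_of_forall_mem hpow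
  refine conj_smul_eq_of_pow_mem hg (Nat.sub_ne_zero_of_lt hmn) ?_
  rw [pow_sub g hmn.le]
  simpa only [inv_inv] using QuotientGroup.eq.1 hcoset.symm

end Conjugates

theorem undistorted_proper_conjugates_general
    {G : Type*} [Group G] (S : Finset G)
    (hsym : ∀ s ∈ S, s⁻¹ ∈ S) (hgen : Subgroup.closure (S : Set G) = ⊤)
    {𝔾 : Type*} [MetricSpace 𝔾] (ι : G → 𝔾)
    (hdist : ∀ x y : G, dist (ι x) (ι y) = floydDist (S : Set G) x y)
    (H : Subgroup G) (T : Set G) (hTgen : Subgroup.closure T = H)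
    (hund : IsUndistorted (S : Set G) T H) (hΛ : 2 ≤ (floydLimitSet ι H).encard) (g : G)
    (hg : (fun x : G => g * x * g⁻¹) '' (H : Set G) ⊆ (H : Set G)) :
    (fun x : G => g * x * g⁻¹) '' (H : Set G) = (H : Set G) := by
  have hS : Submonoid.closure (S : Set G) = ⊤ := submonoid_closure_eq_top hsym hgen
  have hTH : T ⊆ H := hTgen ▸ Subgroup.subset_closure
  have hΛ' : (floydLimitSet ι H).Nontrivial :=
    one_lt_encard_iff_nontrivial.1 (hΛ.trans_lt' (by norm_num))
  have hcosets := hund.finite_cosets_conj_smul_le S.finite_toSet hsym hS hdist hTH hΛ'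
  exact congrArg SetLike.coe (conj_smul_eq_of_finite_cosets hcosets hg)

/-- if `G` has nontrivial Floyd boundary and `H` is an undistorted
finitely generated subgroup with `|Λ(H)| ≥ 2` in `∂G`, then `H` cannot properly contain
a conjugate of itself: for `g ∈ G \ H`, `gHg⁻¹ ⊆ H` implies `gHg⁻¹ = H`. -/
theorem undistorted_proper_conjugates
    {G : Type*} [Group G] (S : Finset G)
    (hsym : ∀ s ∈ S, s⁻¹ ∈ S) (hgen : Subgroup.closure (S : Set G) = ⊤)
    {𝔾 : Type*} [MetricSpace 𝔾] [CompleteSpace 𝔾] [CompactSpace 𝔾]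
    (ι : G → 𝔾)
    (hdist : ∀ x y : G, dist (ι x) (ι y) = floydDist (S : Set G) x y)
    (hdense : DenseRange ι)
    [MulAction G 𝔾]
    (hcont : ∀ g : G, Continuous fun x : 𝔾 => g • x)
    (hext : ∀ g x : G, ι (g * x) = g • ι x)
    (hnontriv : ∃ a b c : 𝔾, a ∉ Set.range ι ∧ b ∉ Set.range ι ∧ c ∉ Set.range ι ∧
      a ≠ b ∧ a ≠ c ∧ b ≠ c)
    (hconv : ∀ K L : Set (𝔾 × 𝔾 × 𝔾), IsCompact K → IsCompact L →
      (∀ t ∈ K ∪ L, (t.1 ∉ Set.range ι ∧ t.2.1 ∉ Set.range ι ∧ t.2.2 ∉ Set.range ι) ∧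
        (t.1 ≠ t.2.1 ∧ t.1 ≠ t.2.2 ∧ t.2.1 ≠ t.2.2)) →
      {g : G | ((g • K) ∩ L).Nonempty}.Finite)
    (H : Subgroup G) (T : Finset G) (hT : (T : Set G) ⊆ (H : Set G))
    (hTgen : Subgroup.closure (T : Set G) = H)
    (hund : IsUndistorted (S : Set G) (T : Set G) H)
    (hΛ : 2 ≤ (floydLimitSet ι H).encard) :
    ∀ g : G, g ∉ H →
      (fun x : G => g * x * g⁻¹) '' (H : Set G) ⊆ (H : Set G) →
      (fun x : G => g * x * g⁻¹) '' (H : Set G) = (H : Set G) := by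
  intro g _
  exact undistorted_proper_conjugates_general S hsym hgen ι hdist H T hTgen hund hΛ g
end
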